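/- Lemma 3.1. Let (X,f) be an expansive homeomorphism of a compact metric space and let Φ = {log φ_n}_{n∈ℕ} be a subadditive potential on X with bounded distortion. Suppose η is an ergodic equilibrium state of Φ satisfying the lower subadditive Gibbs property. Then η is the unique equilibrium state of Φ. -/

import Mathlib

/-!
The proof is Bowen's argument for uniqueness. Let `ν` be an equilibrium state. Since `η` is ergodic
and `ν` is invariant, `ν ≪ η` forces `ν = η`. Otherwise there is a compact set `K` with `η K = 0`
and `ν K > 0`, and `η` is as small as desired on some `δ`-neighbourhood of `K`.

By expansivity there is `N` such that orbits that are close along a window of length `n = 2 N + 1`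
are `δ`-close in the middle of the window (`exists_uniform_expansive`). Let `ξ` be a partition
adapted to a maximal `(n, r)`-separated set with points `e i` (`exists_bowen_partition`): its atoms
lie in the Bowen balls of radius `r` at the `e i`, and the Bowen balls of radius `r / 2` are
disjoint. The partition `ξ` generates under `f^n`, so `n h_ν(f) ≤ H_ν(ξ)` (`entropyKS_le`);
subadditivity gives `n L ≤ ∫ log φ_n dν` for `L = lim (1/n) ∫ log φ_n dν` (`le_div_of_subadditive`),
and bounded distortion bounds this integral by `∑ w_i log φ_n(e i) + log C`, where `w_i` is the
`ν`-measure of the `i`-th atom. As `h_ν(f) + L = P`, with `a_i = exp (-n P) φ_n(e i)` this yields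
`0 ≤ ∑ (-w_i log w_i + w_i log a_i) + log C`.

By the lower Gibbs property, the sum of the `a_i` over any set of atoms is at most `D` times the
`η`-measure of a set containing the corresponding disjoint Bowen balls. Hence the sum over the atoms
whose image under `f^N` meets `K` is at most some prescribed small `s`, while the `ν`-measure of
these atoms is at least `ν K`; the sum over the other atoms is at most `D`. The log-sum inequality
(`negMulLog_add_mul_log_le`) on the two groups turns the estimate into
`0 ≤ log C + 1 + D + ν(K) log s`, which is false for small `s`.

The estimate `n h_ν(f) ≤ H_ν(ξ)` is a Kolmogorov–Sinai theorem for finite partitions. Any finite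
partition is determined, up to small conditional entropy, by one with atoms of small diameter
(`exists_condInfo_le_of_diam`), and the rest follows from strong subadditivity of entropy
(`partInfo_strong_subadd`).
-/

open Filter MeasureTheory
open scoped ENNReal

namespace SubEq

variable {X : Type*}

/-! ### Bowen balls, separated sets, topological pressure -/

/-- The Bowen ball `B_n(x,ε)` with respect to a distance function `ρ` and a map `f`. -/
def bowenBall (ρ : X → X → ℝ) (f : X → X) (n : ℕ) (ε : ℝ) (x : X) : Set X :=
  {y | ∀ k < n, ρ (f^[k] x) (f^[k] y) ≤ ε}

/-- `E` is `(n,ε)`-separated for `f` with respect to the distance `ρ`. -/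
def IsSeparatedSet (ρ : X → X → ℝ) (f : X → X) (n : ℕ) (ε : ℝ) (E : Finset X) : Prop :=
  ∀ x ∈ E, ∀ y ∈ E, x ≠ y → ∃ k < n, ε ≤ ρ (f^[k] x) (f^[k] y)

/-- The subadditive topological pressure
`P(Φ) = lim_{ε→0} limsup_n (1/n) log sup { Σ_{x∈E} φ_n x : E (n,ε)-separated }`;
since the inner quantity is monotone as `ε` decreases, the limit as `ε → 0` is the
supremum over `ε > 0`. -/
noncomputable def pressure (ρ : X → X → ℝ) (f : X → X) (φ : ℕ → X → ℝ) : ℝ :=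
  sSup {p : ℝ | ∃ ε > (0:ℝ), p = atTop.limsup (fun n =>
    Real.log (sSup ((fun E : Finset X => ∑ x ∈ E, φ n x) ''
      {E : Finset X | IsSeparatedSet ρ f n ε E})) / n)}

/-- `Φ = {log φ_n}` is a subadditive potential on `(X,f)`:
each `φ_n` is continuous and positive and
`log φ_{m+n} ≤ log φ_m + log φ_n ∘ f^m`. -/
def IsSubadditivePotential [TopologicalSpace X] (f : X → X) (φ : ℕ → X → ℝ) : Prop :=
  (∀ n, Continuous (φ n)) ∧ (∀ n x, 0 < φ n x) ∧
    ∀ m n, 1 ≤ m → 1 ≤ n → ∀ x : X,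
      Real.log (φ (m + n) x) ≤ Real.log (φ m x) + Real.log (φ n (f^[m] x))

/-! ### Kolmogorov–Sinai entropy -/

/-- Static entropy `H_μ(ξ)` of the finite partition of `X` given by the fibers of
`p : X → ι`. -/
noncomputable def partInfo [MeasurableSpace X] (μ : Measure X) {ι : Type} [Fintype ι]
    (p : X → ι) : ℝ :=
  ∑ i : ι, Real.negMulLog ((μ (p ⁻¹' {i})).toReal)

/-- The dynamical refinement `⋁_{k=0}^{n-1} f^{-k} ξ` of the partition given by `p`. -/
def refinePart (f : X → X) {ι : Type} (p : X → ι) (n : ℕ) : X → (Fin n → ι) :=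
  fun x k => p (f^[(k : ℕ)] x)

/-- Entropy of `f` relative to the partition given by `p`; by subadditivity the limit
defining it equals the infimum. -/
noncomputable def entropyOfPart [MeasurableSpace X] (μ : Measure X) (f : X → X)
    {ι : Type} [Fintype ι] (p : X → ι) : ℝ :=
  ⨅ n : ℕ, partInfo μ (refinePart f p (n + 1)) / (n + 1)

/-- The Kolmogorov–Sinai entropy `h_μ(f)`: the supremum over all finite measurable
partitions of the corresponding partition entropies. -/
noncomputable def entropyKS [MeasurableSpace X] (μ : Measure X) (f : X → X) : ℝ :=
  sSup {h : ℝ | ∃ (m : ℕ) (p : X → Fin m),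
    (∀ i, MeasurableSet (p ⁻¹' {i})) ∧ h = entropyOfPart μ f p}

/-! ### Equilibrium states -/

/-- `μ` is an equilibrium state of the subadditive potential `Φ = {log φ_n}`:
it is an `f`-invariant Borel probability measure with
`h_μ(f) + lim_n (1/n) ∫ log φ_n dμ = P(Φ)`. -/
def IsEqState [TopologicalSpace X] [MeasurableSpace X] (ρ : X → X → ℝ) (f : X → X)
    (φ : ℕ → X → ℝ) (μ : Measure X) : Prop :=
  IsProbabilityMeasure μ ∧ MeasurePreserving f μ μ ∧
    ∃ L : ℝ, Tendsto (fun n => (∫ x, Real.log (φ n x) ∂μ) / n) atTop (nhds L) ∧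
      entropyKS μ f + L = pressure ρ f φ

/-- Bounded distortion: there is `C ≥ 1` such that for all sufficiently small `ε > 0`,
all `x`, `n` and all `y,z ∈ B_n(x,ε)` one has `C⁻¹ ≤ φ_n(y)/φ_n(z) ≤ C`. -/
def HasBoundedDistortion (ρ : X → X → ℝ) (f : X → X) (φ : ℕ → X → ℝ) : Prop :=
  ∃ C : ℝ, 1 ≤ C ∧ ∃ ε₀ > (0:ℝ), ∀ ε, 0 < ε → ε ≤ ε₀ → ∀ (x : X) (n : ℕ),
    ∀ y ∈ bowenBall ρ f n ε x, ∀ z ∈ bowenBall ρ f n ε x,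
      C⁻¹ ≤ φ n y / φ n z ∧ φ n y / φ n z ≤ C

/-- The lower subadditive Gibbs property:
for every `ε > 0` there is `C ≥ 1` with `μ(B_n(x,ε)) ≥ C⁻¹ e^{-nP(Φ)} φ_n(x)`. -/
def HasLowerGibbs [TopologicalSpace X] [MeasurableSpace X] (ρ : X → X → ℝ) (f : X → X)
    (φ : ℕ → X → ℝ) (μ : Measure X) : Prop :=
  ∀ ε > (0:ℝ), ∃ C : ℝ, 1 ≤ C ∧ ∀ (x : X) (n : ℕ),
    ENNReal.ofReal (C⁻¹ * Real.exp (-(n : ℝ) * pressure ρ f φ) * φ n x)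
      ≤ μ (bowenBall ρ f n ε x)

/-- Expansivity of an invertible map `f` with inverse `finv`. -/
def IsExpansive (ρ : X → X → ℝ) (f finv : X → X) : Prop :=
  ∃ ε₀ > (0:ℝ), ∀ x y : X,
    (∀ n : ℕ, ρ (f^[n] x) (f^[n] y) ≤ ε₀ ∧ ρ (finv^[n] x) (finv^[n] y) ≤ ε₀) → x = y

/-! ### Mixing properties -/

/-- The Kolmogorov property of the invertible measure-preserving system `(X,μ,f)`
(`finv` is the inverse of `f`): there is a sub-σ-algebra `K` with `K ⊆ fK`,
`⋁_{n≥0} f^n K` the full σ-algebra, and `⋂_{n≥0} f^{-n} K` trivial mod `μ`. -/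
def HasKProperty [m : MeasurableSpace X] (μ : Measure X) (f finv : X → X) : Prop :=
  ∃ K : MeasurableSpace X, K ≤ m ∧ K ≤ K.map f ∧
    (⨆ n : ℕ, K.map (f^[n])) = m ∧
    ∀ A : Set X, MeasurableSet[⨅ n : ℕ, K.map (finv^[n])] A → μ A = 0 ∨ μ A = 1

/-- Mixing of a measure-preserving system. -/
def IsMixing [MeasurableSpace X] (μ : Measure X) (f : X → X) : Prop :=
  ∀ A B : Set X, MeasurableSet A → MeasurableSet B →
    Tendsto (fun n => μ ((f^[n]) ⁻¹' A ∩ B)) atTop (nhds (μ A * μ B))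

/-- A set of natural numbers has upper density zero. -/
def UpperDensityZero (E : Set ℕ) : Prop :=
  Tendsto (fun n => (Nat.card (E ∩ Set.Iio n : Set ℕ) : ℝ) / n) atTop (nhds 0)

/-- Weak mixing: for all measurable `A,B` there is a set `E ⊆ ℕ` of upper density zero
such that `μ(f^n A ∩ B) → μ(A)μ(B)` along `n ∉ E`. -/
def IsWeaklyMixing [MeasurableSpace X] (μ : Measure X) (f : X → X) : Prop :=
  ∀ A B : Set X, MeasurableSet A → MeasurableSet B →
    ∃ E : Set ℕ, UpperDensityZero E ∧
      Tendsto (fun n => μ ((f^[n]) ⁻¹' A ∩ B)) (atTop ⊓ Filter.principal Eᶜ)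
        (nhds (μ A * μ B))

/-- Total ergodicity: `f^n` is ergodic for every `n ≥ 1`. -/
def IsTotallyErgodic [MeasurableSpace X] (μ : Measure X) (f : X → X) : Prop :=
  ∀ n : ℕ, 1 ≤ n → Ergodic (f^[n]) μ

/-! ### Measure-theoretic isomorphism and the Bernoulli property -/

/-- Measure-theoretic isomorphism of the systems `(X,μ,f)` and `(Y,ν,g)`. -/
def IsMeasureIso {Y : Type*} [MeasurableSpace X] [MeasurableSpace Y]
    (μ : Measure X) (ν : Measure Y) (f : X → X) (g : Y → Y) : Prop :=
  ∃ Θ : X → Y, Measurable Θ ∧ Measure.map Θ μ = ν ∧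
    (∀ᵐ x ∂μ, Θ (f x) = g (Θ x)) ∧
    ∃ Ψ : Y → X, Measurable Ψ ∧ (∀ᵐ x ∂μ, Ψ (Θ x) = x) ∧ (∀ᵐ y ∂ν, Θ (Ψ y) = y)

/-- The left shift on a full shift space `ℤ → ι`. -/
def fullShift {ι : Type*} : (ℤ → ι) → (ℤ → ι) := fun x i => x (i + 1)

/-- `(X,μ,f)` is Bernoulli: it is measurably isomorphic to a Bernoulli shift, i.e. to a
two-sided full shift on a finite alphabet equipped with a product (i.i.d.) measure. -/
def IsBernoulli [MeasurableSpace X] (μ : Measure X) (f : X → X) : Prop :=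
  ∃ (m : ℕ) (p : Fin m → ℝ≥0∞), (∑ i : Fin m, p i) = 1 ∧
    ∃ ν : Measure (ℤ → Fin m),
      (∀ (s : Finset ℤ) (a : ℤ → Fin m),
        ν {x : ℤ → Fin m | ∀ i ∈ s, x i = a i} = ∏ i ∈ s, p (a i)) ∧
      IsMeasureIso μ ν f fullShift

/-! ### Entropy of finite partitions -/

section Entropy

/-- A map into a finite index type is admissible as (the labelling of) a measurable partition when
all preimages are measurable. -/
def MeasPart [MeasurableSpace X] {ι : Type} (p : X → ι) : Prop :=
  ∀ s : Set ι, MeasurableSet (p ⁻¹' s)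

variable [MeasurableSpace X] {μ : Measure X} {ι κ ρ : Type}

lemma measPart_of_singleton [Finite ι] {p : X → ι} (h : ∀ i, MeasurableSet (p ⁻¹' {i})) :
    MeasPart p := by
  intro s
  rw [← Set.biUnion_preimage_singleton]
  exact MeasurableSet.biUnion (Set.to_countable s) fun i _ => h i

lemma MeasPart.comp {p : X → ι} (h : MeasPart p) (e : ι → κ) : MeasPart (fun x => e (p x)) :=
  fun s => h (e ⁻¹' s)

lemma MeasPart.comp_right {p : X → ι} (h : MeasPart p) {T : X → X} (hT : Measurable T) :
    MeasPart (fun x => p (T x)) :=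
  fun s => hT (h s)

lemma MeasPart.prodMk [Finite ι] [Finite κ] {p : X → ι} {q : X → κ} (hp : MeasPart p)
    (hq : MeasPart q) : MeasPart (fun x => (p x, q x)) := by
  refine measPart_of_singleton ?_
  rintro ⟨i, j⟩
  convert (hp {i}).inter (hq {j}) using 1
  ext x
  simp

lemma MeasPart.refinePart [Finite ι] {p : X → ι} (hp : MeasPart p) {f : X → X}
    (hf : Measurable f) (n : ℕ) : MeasPart (refinePart f p n) := by
  refine measPart_of_singleton fun v => ?_
  have : SubEq.refinePart f p n ⁻¹' {v} =
      ⋂ k : Fin n, (fun x => p (f^[(k : ℕ)] x)) ⁻¹' {v k} := by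
    ext x
    simp [SubEq.refinePart, funext_iff]
  rw [this]
  exact MeasurableSet.iInter fun k => hp.comp_right (hf.iterate _) _

lemma measureReal_eq_sum_inter [IsFiniteMeasure μ] [Fintype ι] {p : X → ι} (hp : MeasPart p)
    (A : Set X) : μ.real A = ∑ j, μ.real (A ∩ p ⁻¹' {j}) := by
  have h := sum_measureReal_preimage_singleton (μ := μ.restrict A) Finset.univ (f := p)
    (fun y _ => hp {y})
  simp only [Finset.coe_univ, Set.preimage_univ, measureReal_restrict_apply MeasurableSet.univ,
    Set.univ_inter, measureReal_restrict_apply (hp _)] at h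
  rw [← h]
  simp only [Set.inter_comm]

lemma partInfo_nonneg [IsProbabilityMeasure μ] [Fintype ι] (p : X → ι) : 0 ≤ partInfo μ p :=
  Finset.sum_nonneg fun _ _ => Real.negMulLog_nonneg ENNReal.toReal_nonneg
    (by simpa [Measure.real] using measureReal_le_one (μ := μ))

/-- Entropy depends only on the partition, not on how its atoms are labelled. -/
lemma partInfo_comp_injective [Fintype ι] [Fintype κ] (p : X → ι) {e : ι → κ}
    (he : Function.Injective e) : partInfo μ (fun x => e (p x)) = partInfo μ p := by
  unfold partInfo
  symm
  refine Fintype.sum_of_injective e he _ _ ?_ ?_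
  · intro c hc
    have : (fun x => e (p x)) ⁻¹' {c} = ∅ := by
      ext x
      simp only [Set.mem_preimage, Set.mem_singleton_iff, Set.mem_empty_iff_false, iff_false]
      exact fun h => hc ⟨_, h⟩
    simp [this]
  · intro i
    congr 3
    ext x
    simp [he.eq_iff]

lemma partInfo_comp_preserving [Fintype ι] {p : X → ι} (hp : MeasPart p) {T : X → X}
    (hT : MeasurePreserving T μ μ) : partInfo μ (fun x => p (T x)) = partInfo μ p := by
  unfold partInfo
  refine Finset.sum_congr rfl fun i _ => ?_
  rw [← hT.measure_preimage (hp {i}).nullMeasurableSet]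
  rfl

lemma negMulLog_sum_le (s : Finset ι) (w : ι → ℝ) (hw : ∀ i, 0 ≤ w i) :
    Real.negMulLog (∑ i ∈ s, w i) ≤ ∑ i ∈ s, Real.negMulLog (w i) := by
  rw [Real.negMulLog, neg_mul, Finset.sum_mul, ← Finset.sum_neg_distrib]
  refine Finset.sum_le_sum fun i hi => ?_
  rw [Real.negMulLog, neg_mul, neg_le_neg_iff]
  rcases (hw i).eq_or_lt with h | h
  · simp [← h]
  · gcongr
    exact Finset.single_le_sum (fun j _ => hw j) hi

lemma partInfo_snd_le [IsFiniteMeasure μ] [Fintype ι] [Fintype κ] {p : X → ι} (hp : MeasPart p)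
    (q : X → κ) : partInfo μ q ≤ partInfo μ (fun x => (p x, q x)) := by
  unfold partInfo
  rw [Fintype.sum_prod_type_right]
  refine Finset.sum_le_sum fun j _ => ?_
  change Real.negMulLog (μ.real _) ≤ _
  rw [measureReal_eq_sum_inter hp]
  refine (negMulLog_sum_le _ _ fun _ => measureReal_nonneg).trans_eq ?_
  refine Finset.sum_congr rfl fun i _ => ?_
  change _ = Real.negMulLog (μ.real _)
  congr 2
  ext x
  simp [and_comm]

/-- A coarser partition has smaller entropy. -/
lemma partInfo_comp_le [IsFiniteMeasure μ] [Fintype ι] [Fintype κ] {p : X → ι} (hp : MeasPart p)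
    (h : ι → κ) : partInfo μ (fun x => h (p x)) ≤ partInfo μ p := by
  refine (partInfo_snd_le hp _).trans_eq ?_
  exact partInfo_comp_injective p (e := fun i => (i, h i)) fun a b hab => (Prod.ext_iff.1 hab).1

/-- Strong subadditivity of the entropy of a finite array of weights. It follows from
`log u ≤ u - 1` applied to `u = a b / (w c)`, where `a`, `b`, `c` are the marginals. -/
lemma strong_subadd_weights [Fintype ι] [Fintype κ] [Fintype ρ] (w : ι → κ → ρ → ℝ)
    (hw : ∀ i j k, 0 ≤ w i j k) :
    (∑ k, ∑ i, ∑ j, Real.negMulLog (w i j k)) + ∑ k, Real.negMulLog (∑ i, ∑ j, w i j k) ≤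
      (∑ k, ∑ i, Real.negMulLog (∑ j, w i j k)) + ∑ k, ∑ j, Real.negMulLog (∑ i, w i j k) := by
  rw [← Finset.sum_add_distrib, ← Finset.sum_add_distrib]
  refine Finset.sum_le_sum fun k _ => ?_
  set a : ι → ℝ := fun i => ∑ j, w i j k with ha
  set b : κ → ℝ := fun j => ∑ i, w i j k with hb
  set c : ℝ := ∑ i, a i with hc
  have hcb : ∑ j, b j = c := Finset.sum_comm
  have hwa : ∀ i j, w i j k ≤ a i := fun i j =>
    Finset.single_le_sum (f := fun j => w i j k) (fun j _ => hw i j k) (Finset.mem_univ j)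
  have hwb : ∀ i j, w i j k ≤ b j := fun i j =>
    Finset.single_le_sum (f := fun i => w i j k) (fun i _ => hw i j k) (Finset.mem_univ i)
  have ha0 : ∀ i, 0 ≤ a i := fun i => Finset.sum_nonneg fun j _ => hw i j k
  have hb0 : ∀ j, 0 ≤ b j := fun j => Finset.sum_nonneg fun i _ => hw i j k
  have hac : ∀ i, a i ≤ c := fun i => Finset.single_le_sum (fun i _ => ha0 i) (Finset.mem_univ i)
  have hc0 : 0 ≤ c := Finset.sum_nonneg fun i _ => ha0 i
  have key : ∀ i j, Real.negMulLog (w i j k) + w i j k * (-Real.log c) ≤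
      w i j k * (-Real.log (a i)) + w i j k * (-Real.log (b j)) + (a i * b j / c - w i j k) := by
    intro i j
    rcases (hw i j k).eq_or_lt with h | h
    · rw [← h]
      simp only [Real.negMulLog_zero, zero_mul, add_zero, zero_add, sub_zero]
      exact div_nonneg (mul_nonneg (ha0 i) (hb0 j)) hc0
    · have hai := h.trans_le (hwa i j)
      have hbj := h.trans_le (hwb i j)
      have hcc := hai.trans_le (hac i)
      have := Real.log_le_sub_one_of_pos (x := a i * b j / (w i j k * c)) (by positivity)
      rw [Real.log_div (by positivity) (by positivity), Real.log_mul hai.ne' hbj.ne',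
        Real.log_mul h.ne' hcc.ne'] at this
      have h2 := mul_le_mul_of_nonneg_left this h.le
      have h3 : w i j k * (a i * b j / (w i j k * c) - 1) = a i * b j / c - w i j k := by
        field_simp
      rw [h3] at h2
      rw [Real.negMulLog]
      linarith
  have hsum := Finset.sum_le_sum fun i (_ : i ∈ Finset.univ) =>
    Finset.sum_le_sum fun j (_ : j ∈ Finset.univ) => key i j
  simp only [Finset.sum_add_distrib, Finset.sum_sub_distrib] at hsum
  have e1 : ∑ i, ∑ j, w i j k * (-Real.log c) = Real.negMulLog c := by
    simp only [← Finset.sum_mul]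
    rw [Real.negMulLog]
    simp only [hc, ha]
    ring
  have e2 : ∑ i, ∑ j, w i j k * (-Real.log (a i)) = ∑ i, Real.negMulLog (a i) := by
    simp only [← Finset.sum_mul]
    exact Finset.sum_congr rfl fun i _ => by rw [Real.negMulLog]; ring
  have e3 : ∑ i, ∑ j, w i j k * (-Real.log (b j)) = ∑ j, Real.negMulLog (b j) := by
    rw [Finset.sum_comm]
    simp only [← Finset.sum_mul]
    exact Finset.sum_congr rfl fun i _ => by rw [Real.negMulLog]; ring
  have e4 : ∑ i, ∑ j, a i * b j / c = c := by
    simp only [← Finset.sum_div, ← Finset.mul_sum, ← Finset.sum_mul]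
    rw [hcb, ← hc]
    rcases hc0.eq_or_lt with h | h
    · simp [← h]
    · field_simp
  have e5 : ∑ i, ∑ j, w i j k = c := rfl
  rw [e1, e2, e3, e4, e5] at hsum
  linarith

lemma partInfo_strong_subadd [IsFiniteMeasure μ] [Fintype ι] [Fintype κ] [Fintype ρ]
    {p : X → ι} {q : X → κ} (hp : MeasPart p) (hq : MeasPart q) (r : X → ρ) :
    partInfo μ (fun x => (p x, q x, r x)) + partInfo μ r ≤
      partInfo μ (fun x => (p x, r x)) + partInfo μ (fun x => (q x, r x)) := by
  have h := strong_subadd_weights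
    (fun i j k => μ.real (p ⁻¹' {i} ∩ q ⁻¹' {j} ∩ r ⁻¹' {k})) fun _ _ _ => measureReal_nonneg
  have h1 : ∀ i k, ∑ j, μ.real (p ⁻¹' {i} ∩ q ⁻¹' {j} ∩ r ⁻¹' {k}) =
      μ.real (p ⁻¹' {i} ∩ r ⁻¹' {k}) := by
    intro i k
    rw [measureReal_eq_sum_inter hq]
    exact Finset.sum_congr rfl fun j _ => by rw [Set.inter_right_comm]
  have h2 : ∀ j k, ∑ i, μ.real (p ⁻¹' {i} ∩ q ⁻¹' {j} ∩ r ⁻¹' {k}) =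
      μ.real (q ⁻¹' {j} ∩ r ⁻¹' {k}) := by
    intro j k
    rw [measureReal_eq_sum_inter hp]
    exact Finset.sum_congr rfl fun i _ => by rw [Set.inter_assoc, Set.inter_comm]
  have h3 : ∀ k, ∑ i, μ.real (p ⁻¹' {i} ∩ r ⁻¹' {k}) = μ.real (r ⁻¹' {k}) := by
    intro k
    rw [measureReal_eq_sum_inter hp (r ⁻¹' {k})]
    exact Finset.sum_congr rfl fun i _ => by rw [Set.inter_comm]
  simp only [h1, h2, h3] at h
  have e1 : partInfo μ (fun x => (p x, q x, r x)) =
      ∑ k, ∑ i, ∑ j, Real.negMulLog (μ.real (p ⁻¹' {i} ∩ q ⁻¹' {j} ∩ r ⁻¹' {k})) := by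
    unfold partInfo
    rw [Fintype.sum_prod_type]
    simp only [Fintype.sum_prod_type_right]
    rw [Finset.sum_comm]
    refine Finset.sum_congr rfl fun k _ => Finset.sum_congr rfl fun i _ =>
      Finset.sum_congr rfl fun j _ => ?_
    change Real.negMulLog (μ.real _) = _
    congr 2
    ext x
    simp [and_assoc]
  have e2 : ∀ {α : Type} [Fintype α] (s : X → α), partInfo μ (fun x => (s x, r x)) =
      ∑ k, ∑ i, Real.negMulLog (μ.real (s ⁻¹' {i} ∩ r ⁻¹' {k})) := by
    intro α _ s
    unfold partInfo
    rw [Fintype.sum_prod_type_right]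
    refine Finset.sum_congr rfl fun k _ => Finset.sum_congr rfl fun i _ => ?_
    change Real.negMulLog (μ.real _) = _
    congr 2
    ext x
    simp
  rw [e1, e2, e2]
  exact h

/-- Conditional entropy `H(p | q) = H(p ∨ q) - H(q)` of finite partitions. -/
noncomputable def condInfo (μ : Measure X) [Fintype ι] [Fintype κ] (p : X → ι) (q : X → κ) : ℝ :=
  partInfo μ (fun x => (p x, q x)) - partInfo μ q

/-- Conditioning on a coarser partition increases the conditional entropy. -/
lemma condInfo_le_comp [IsFiniteMeasure μ] [Fintype ι] [Fintype κ] [Fintype ρ] {p : X → ι}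
    {q : X → κ} (hp : MeasPart p) (hq : MeasPart q) (h : κ → ρ) :
    condInfo μ p q ≤ condInfo μ p (fun x => h (q x)) := by
  have h1 := partInfo_strong_subadd (μ := μ) hp hq (fun x => h (q x))
  have h2 : partInfo μ (fun x => (p x, q x, h (q x))) = partInfo μ (fun x => (p x, q x)) :=
    partInfo_comp_injective (fun x => (p x, q x)) (e := fun z => (z.1, z.2, h z.2))
      (by rintro ⟨a, b⟩ ⟨c, d⟩ hab; simp at hab; simp [hab])
  have h3 : partInfo μ (fun x => (q x, h (q x))) = partInfo μ q :=
    partInfo_comp_injective q (e := fun z => (z, h z)) fun a b hab => (Prod.ext_iff.1 hab).1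
  unfold condInfo
  linarith

lemma condInfo_comp_preserving [Fintype ι] [Fintype κ] {p : X → ι} {q : X → κ}
    (hp : MeasPart p) (hq : MeasPart q) {T : X → X} (hT : MeasurePreserving T μ μ) :
    condInfo μ (fun x => p (T x)) (fun x => q (T x)) = condInfo μ p q := by
  unfold condInfo
  rw [partInfo_comp_preserving hq hT, partInfo_comp_preserving (hp.prodMk hq) hT]

/-- Subadditivity of the conditional entropy of a refinement along the orbit. -/
lemma partInfo_refinePart_prod_le [IsFiniteMeasure μ] [Fintype ι] [Fintype κ] {p : X → ι}
    (q : X → κ) (hp : MeasPart p) {g : X → X} (hg : Measurable g) (l : ℕ) :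
    partInfo μ (fun x => (refinePart g p l x, q x)) ≤
      partInfo μ q + ∑ i ∈ Finset.range l, condInfo μ (fun x => p (g^[i] x)) q := by
  induction l with
  | zero =>
    simp only [Finset.range_zero, Finset.sum_empty, add_zero]
    have h : (fun x => (refinePart g p 0 x, q x)) =
        fun x => ((fun z => ((Fin.elim0 : Fin 0 → ι), z)) (q x)) := by
      ext x
      · exact Fin.elim0 ‹_›
      · rfl
    rw [h]
    exact (partInfo_comp_injective q (e := fun z => ((Fin.elim0 : Fin 0 → ι), z))
      fun a b hab => (Prod.ext_iff.1 hab).2).le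
  | succ l ih =>
    have h1 := partInfo_strong_subadd (μ := μ) (hp.comp_right (hg.iterate l))
      (hp.refinePart hg l) q
    have h2 : partInfo μ (fun x => (p (g^[l] x), refinePart g p l x, q x)) =
        partInfo μ (fun x => (refinePart g p (l + 1) x, q x)) := by
      symm
      refine (partInfo_comp_injective (μ := μ) (fun x => (refinePart g p (l + 1) x, q x))
        (e := fun z => (z.1 (Fin.last l), fun i : Fin l => z.1 i.castSucc, z.2)) ?_).symm
      rintro ⟨a, b⟩ ⟨c, d⟩ hab
      simp only [Prod.mk.injEq] at hab ⊢
      refine ⟨?_, hab.2.2⟩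
      ext i
      refine Fin.lastCases hab.1 (fun i => congrFun hab.2.1 i) i
    rw [Finset.sum_range_succ]
    unfold condInfo at ih ⊢
    linarith

lemma partInfo_refinePart_le [IsProbabilityMeasure μ] [Fintype ι] {p : X → ι}
    (hp : MeasPart p) {g : X → X} (hg : MeasurePreserving g μ μ) (l : ℕ) :
    partInfo μ (refinePart g p l) ≤ l * partInfo μ p := by
  have h0 : partInfo μ (fun _ : X => ()) = 0 := by simp [partInfo]
  have hc : ∀ {κ : Type} [Fintype κ] (q : X → κ), partInfo μ (fun x => (q x, ())) =
      partInfo μ q := fun q => partInfo_comp_injective q (e := fun z => (z, ()))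
        fun a b hab => (Prod.ext_iff.1 hab).1
  have h := partInfo_refinePart_prod_le (μ := μ) (fun _ : X => ()) hp hg.measurable l
  have h2 : ∀ i, condInfo μ (fun x => p (g^[i] x)) (fun _ : X => ()) = partInfo μ p := by
    intro i
    unfold condInfo
    rw [hc, h0, sub_zero, partInfo_comp_preserving hp (hg.iterate i)]
  simpa [hc, h0, h2] using h

end Entropy

/-! ### Generators and the Kolmogorov–Sinai bound -/

section Generator

variable {ι κ : Type}

/-- The labelling `ξ` is a generator for `g` in the topological sense: for every `δ > 0`, a finite
`g`-itinerary of `x` with respect to `ξ` determines some `g^a x` up to distance `δ`. -/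
def IsGenerating [MetricSpace X] (g : X → X) (ξ : X → ι) : Prop :=
  ∀ δ > (0 : ℝ), ∃ a M : ℕ, ∀ x y, refinePart g ξ M x = refinePart g ξ M y →
    dist (g^[a] x) (g^[a] y) < δ

/-- A labelling `q` that agrees with `p` outside a set of small measure determines `p` up to small
conditional entropy, uniformly in `q` and in a change of variables `T`. -/
lemma exists_condInfo_le_of_close [MeasurableSpace X] [Fintype ι] (μ : Measure X)
    [IsProbabilityMeasure μ] {p : X → ι} (hp : MeasPart p) {ε : ℝ} (hε : 0 < ε) :
    ∃ η > 0, ∀ (T : X → X) (q : X → ι), MeasurePreserving T μ μ → MeasPart q →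
      ∀ N : Set X, μ.real N < η → (∀ x, x ∉ N → q x = p (T x)) →
        condInfo μ (fun x => p (T x)) q ≤ ε := by
  classical
  -- The conditional entropy as a function of the joint distribution; it vanishes at `w₀`.
  let F : (ι → ι → ℝ) → ℝ := fun w =>
    (∑ j, ∑ i, Real.negMulLog (w i j)) - ∑ j, Real.negMulLog (∑ i, w i j)
  have hF : Continuous F := by fun_prop
  let w₀ : ι → ι → ℝ := fun i j => if i = j then μ.real (p ⁻¹' {i}) else 0
  have hw₀ : F w₀ = 0 := by
    have h1 : ∀ j, ∑ i, Real.negMulLog (w₀ i j) = Real.negMulLog (μ.real (p ⁻¹' {j})) := by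
      intro j
      rw [Finset.sum_eq_single j]
      · simp [w₀]
      · intro i _ hij
        simp [w₀, hij]
      · simp
    have h2 : ∀ j, ∑ i, w₀ i j = μ.real (p ⁻¹' {j}) := by
      intro j
      simp [w₀]
    simp only [F, h1, h2, sub_self]
  obtain ⟨η, hη, hηF⟩ := Metric.continuousAt_iff.1 (hF.continuousAt (x := w₀)) ε hε
  refine ⟨η, hη, fun T q hT hq N hN hqN => ?_⟩
  let w : ι → ι → ℝ := fun i j => μ.real ((fun x => p (T x)) ⁻¹' {i} ∩ q ⁻¹' {j})
  have hpT : MeasPart (fun x => p (T x)) := hp.comp_right hT.measurable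
  have hFw : condInfo μ (fun x => p (T x)) q = F w := by
    unfold condInfo
    simp only [F]
    congr 1
    · unfold partInfo
      rw [Fintype.sum_prod_type_right]
      refine Finset.sum_congr rfl fun j _ => Finset.sum_congr rfl fun i _ => ?_
      change Real.negMulLog (μ.real _) = _
      congr 2
      ext x
      simp
    · refine Finset.sum_congr rfl fun j _ => ?_
      change Real.negMulLog (μ.real _) = _
      rw [measureReal_eq_sum_inter hpT]
      simp only [w, Set.inter_comm]
  have hclose : dist w w₀ < η := by
    rw [dist_pi_lt_iff hη]
    intro i
    rw [dist_pi_lt_iff hη]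
    intro j
    rw [Real.dist_eq]
    by_cases hij : i = j
    · subst hij
      have e : μ.real (p ⁻¹' {i}) = μ.real ((fun x => p (T x)) ⁻¹' {i}) :=
        (hT.measureReal_preimage (hp {i}).nullMeasurableSet).symm
      have h1 : w i i ≤ μ.real ((fun x => p (T x)) ⁻¹' {i}) := measureReal_mono Set.inter_subset_left
      have h2 : μ.real ((fun x => p (T x)) ⁻¹' {i}) ≤ w i i + μ.real N := by
        refine (measureReal_mono ?_).trans (measureReal_union_le _ _)
        intro x hx
        by_cases hxN : x ∈ N
        · exact Or.inr hxN
        · refine Or.inl ⟨hx, ?_⟩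
          rw [Set.mem_preimage, hqN x hxN]
          exact hx
      simp only [w₀, if_true, e]
      rw [abs_lt]
      constructor <;> linarith
    · have h1 : w i j ≤ μ.real N := by
        refine measureReal_mono ?_
        rintro x ⟨hx, hx'⟩
        by_contra hxN
        simp only [Set.mem_preimage, Set.mem_singleton_iff] at hx hx'
        rw [hqN x hxN, hx] at hx'
        exact hij hx'
      simp only [w₀, hij, if_false, sub_zero]
      rw [abs_of_nonneg measureReal_nonneg]
      exact h1.trans_lt hN
  have := hηF hclose
  rw [hw₀, Real.dist_eq, sub_zero] at this
  rw [hFw]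
  exact (le_abs_self _).trans this.le

variable [MetricSpace X] [CompactSpace X] [MeasurableSpace X] [BorelSpace X]

/-- A partition whose atoms are mapped by `T` to sets of small diameter determines `p ∘ T` up to
small conditional entropy: approximate the atoms of `p` from inside by compact sets, which are a
positive distance apart. -/
lemma exists_condInfo_le_of_diam [Fintype ι] (μ : Measure X) [IsProbabilityMeasure μ] {p : X → ι}
    (hp : MeasPart p) {ε : ℝ} (hε : 0 < ε) :
    ∃ δ > 0, ∀ (κ : Type) (_ : Fintype κ) (ζ : X → κ) (T : X → X), MeasPart ζ →
      MeasurePreserving T μ μ → (∀ x y, ζ x = ζ y → dist (T x) (T y) < δ) →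
        condInfo μ (fun x => p (T x)) ζ ≤ ε := by
  classical
  obtain ⟨η, hη, hclose⟩ := exists_condInfo_le_of_close μ hp hε
  obtain ⟨x₀⟩ : Nonempty X := nonempty_of_isProbabilityMeasure μ
  have hcard : (0 : ℝ) < Fintype.card ι := by
    exact_mod_cast Fintype.card_pos_iff.2 ⟨p x₀⟩
  have hK : ∀ i, ∃ K, K ⊆ p ⁻¹' {i} ∧ IsCompact K ∧
      μ (p ⁻¹' {i} \ K) < ENNReal.ofReal (η / Fintype.card ι) := fun i =>
    (hp {i}).exists_isCompact_sdiff_lt (measure_ne_top _ _)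
      (ENNReal.ofReal_pos.2 (div_pos hη hcard)).ne'
  choose K hKp hKc hKμ using hK
  have hcomp : IsCompact (⋃ i, ⋃ j, if i = j then (∅ : Set (X × X)) else K i ×ˢ K j) := by
    refine isCompact_iUnion fun i => isCompact_iUnion fun j => ?_
    split_ifs
    · exact isCompact_empty
    · exact (hKc i).prod (hKc j)
  obtain ⟨δ, hδ, hδK⟩ := hcomp.exists_forall_le' (f := fun z : X × X => dist z.1 z.2) (a := 0)
    continuous_dist.continuousOn (by
      rintro ⟨x, y⟩ hxy
      simp only [Set.mem_iUnion] at hxy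
      obtain ⟨i, j, hxy⟩ := hxy
      split_ifs at hxy with hij
      · exact absurd hxy (Set.notMem_empty _)
      · refine dist_pos.2 ?_
        rintro (rfl : x = y)
        exact hij ((hKp i hxy.1).symm.trans (hKp j hxy.2)))
  refine ⟨δ, hδ, fun κ _ ζ T hζ hT hdiam => ?_⟩
  let h : κ → ι := fun c => if hc : ∃ i x, ζ x = c ∧ T x ∈ K i then hc.choose else p x₀
  refine (condInfo_le_comp (hp.comp_right hT.measurable) hζ h).trans ?_
  refine hclose T (fun x => h (ζ x)) hT (hζ.comp h) (T ⁻¹' ⋃ i, (p ⁻¹' {i} \ K i)) ?_ ?_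
  · rw [hT.measureReal_preimage (MeasurableSet.iUnion fun i =>
      (hp {i}).diff (hKc i).isClosed.measurableSet).nullMeasurableSet]
    calc μ.real (⋃ i, (p ⁻¹' {i} \ K i)) ≤ ∑ i, μ.real (p ⁻¹' {i} \ K i) :=
          measureReal_iUnion_fintype_le _
      _ < ∑ _i : ι, η / Fintype.card ι := by
          refine Finset.sum_lt_sum_of_nonempty ⟨p x₀, Finset.mem_univ _⟩ fun i _ => ?_
          exact (ENNReal.lt_ofReal_iff_toReal_lt (measure_ne_top _ _)).1 (hKμ i)
      _ = η := by
          rw [Finset.sum_const, Finset.card_univ, nsmul_eq_mul]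
          field_simp
  · intro x hx
    have hxK : T x ∈ K (p (T x)) := by
      by_contra hcon
      exact hx (Set.mem_iUnion.2 ⟨p (T x), rfl, hcon⟩)
    have hc : ∃ i y, ζ y = ζ x ∧ T y ∈ K i := ⟨_, x, rfl, hxK⟩
    have hh : h (ζ x) = hc.choose := dif_pos hc
    rw [hh]
    obtain ⟨y, hy, hyK⟩ := hc.choose_spec
    by_contra hne
    have h1 := hδK (T y, T x) (Set.mem_iUnion.2 ⟨hc.choose, Set.mem_iUnion.2 ⟨p (T x), by
      rw [if_neg hne]; exact ⟨hyK, hxK⟩⟩⟩)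
    exact (hdiam y x hy).not_ge h1

/-- A quantitative Kolmogorov–Sinai theorem: the entropy of any partition along `l` steps is at
most that of a generator along `l + M` steps, up to an error linear in `l` with small slope. -/
lemma exists_partInfo_refinePart_le [Fintype ι] [Fintype κ] {μ : Measure X}
    [IsProbabilityMeasure μ] {g : X → X} (hg : MeasurePreserving g μ μ) {p : X → ι}
    (hp : MeasPart p) {ξ : X → κ} (hξ : MeasPart ξ) (hgen : IsGenerating g ξ) {ε : ℝ}
    (hε : 0 < ε) :
    ∃ M : ℕ, ∀ l : ℕ, partInfo μ (refinePart g p l) ≤ (l + M : ℕ) * partInfo μ ξ + l * ε := by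
  obtain ⟨δ, hδ, hsmall⟩ := exists_condInfo_le_of_diam μ hp hε
  obtain ⟨a, M, haM⟩ := hgen δ hδ
  have hgm := hg.measurable
  have hpa : MeasPart (fun x => p (g^[a] x)) := hp.comp_right (hgm.iterate a)
  have h0 := hsmall (Fin M → κ) inferInstance _ _ (hξ.refinePart hgm M) (hg.iterate a) haM
  refine ⟨M, fun l => ?_⟩
  set Q := refinePart g ξ (l + M) with hQ
  have hQm : MeasPart Q := hξ.refinePart hgm _
  have hstep : ∀ i ∈ Finset.range l, condInfo μ (fun x => p (g^[a] (g^[i] x))) Q ≤ ε := by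
    intro i hi
    rw [Finset.mem_range] at hi
    refine (condInfo_le_comp (hpa.comp_right (hgm.iterate i)) hQm
      (fun v (k : Fin M) => v ⟨k + i, by omega⟩)).trans ?_
    have : (fun x => (fun (k : Fin M) => Q x ⟨k + i, by omega⟩)) =
        fun x => refinePart g ξ M (g^[i] x) := by
      ext x k
      simp only [hQ, refinePart, Function.iterate_add_apply]
    rw [this]
    exact (condInfo_comp_preserving hpa (hξ.refinePart hgm M) (hg.iterate i)).trans_le h0
  have h1 : partInfo μ (refinePart g p l) =
      partInfo μ (refinePart g (fun x => p (g^[a] x)) l) := by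
    rw [← partInfo_comp_preserving (hp.refinePart hgm l) (hg.iterate a)]
    congr 1
    ext x k
    simp only [refinePart, ← Function.iterate_add_apply]
    rw [add_comm]
  rw [h1]
  have h2 := partInfo_refinePart_prod_le (μ := μ) Q hpa hgm l
  have h3 := partInfo_comp_le (μ := μ) ((hpa.refinePart hgm l).prodMk hQm) Prod.fst
  have h4 := Finset.sum_le_sum hstep
  rw [Finset.sum_const, Finset.card_range, nsmul_eq_mul] at h4
  have h5 := partInfo_refinePart_le hξ hg (l + M)
  linarith

/-- If `ξ` is a generator for `f^n`, then the entropy of `f` is at most `H(ξ) / n`. -/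
lemma entropyKS_le [Fintype κ] {μ : Measure X} [IsProbabilityMeasure μ] {f : X → X}
    (hf : MeasurePreserving f μ μ) {n : ℕ} (hn : 0 < n) {ξ : X → κ} (hξ : MeasPart ξ)
    (hgen : IsGenerating f^[n] ξ) : entropyKS μ f ≤ partInfo μ ξ / n := by
  have hn' : (0 : ℝ) < n := by exact_mod_cast hn
  refine Real.sSup_le ?_ (div_nonneg (partInfo_nonneg ξ) hn'.le)
  rintro _ ⟨m, p, hp, rfl⟩
  have hp : MeasPart p := measPart_of_singleton hp
  refine le_of_forall_pos_le_add fun ε hε => ?_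
  obtain ⟨M, hM⟩ := exists_partInfo_refinePart_le (hf.iterate n)
    (hp.refinePart hf.measurable n) hξ hgen (ε := n * ε) (by positivity)
  have key : ∀ l : ℕ, entropyOfPart μ f p ≤
      (partInfo μ ξ / n + ε) + (M * partInfo μ ξ / n) * (1 / ((l : ℝ) + 1)) := by
    intro l
    obtain ⟨k, hk⟩ : ∃ k, k + 1 = n * (l + 1) :=
      ⟨n * (l + 1) - 1, Nat.succ_pred_eq_of_pos (Nat.mul_pos hn l.succ_pos)⟩
    have hkR : (k : ℝ) + 1 = n * (l + 1) := by exact_mod_cast hk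
    have h1 : entropyOfPart μ f p ≤ partInfo μ (refinePart f p (k + 1)) / (k + 1) :=
      ciInf_le (f := fun n : ℕ => partInfo μ (refinePart f p (n + 1)) / (n + 1))
        ⟨0, by rintro _ ⟨j, rfl⟩; exact div_nonneg (partInfo_nonneg _) (by positivity)⟩ k
    have h2 : partInfo μ (refinePart f p (k + 1)) ≤
        partInfo μ (refinePart f^[n] (refinePart f p n) (l + 1)) := by
      have hlt : ∀ i : Fin (k + 1), (i : ℕ) / n < l + 1 := fun i =>
        Nat.div_lt_of_lt_mul (by have := i.2; omega)
      let e : (Fin (l + 1) → Fin n → Fin m) → Fin (k + 1) → Fin m := fun v i =>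
        v ⟨i / n, hlt i⟩ ⟨i % n, Nat.mod_lt _ hn⟩
      have : refinePart f p (k + 1) =
          fun x => e (refinePart f^[n] (refinePart f p n) (l + 1) x) := by
        ext x i
        simp only [e, refinePart, ← Function.iterate_mul, ← Function.iterate_add_apply,
          Nat.mod_add_div]
      rw [this]
      exact partInfo_comp_le ((hp.refinePart hf.measurable n).refinePart
        (hf.measurable.iterate n) (l + 1)) e
    have h3 := h2.trans (hM (l + 1))
    refine h1.trans ?_
    rw [hkR, div_le_iff₀ (by positivity)]
    refine h3.trans_eq ?_
    push_cast
    field_simp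
    ring
  have hlim : Tendsto (fun l : ℕ => (partInfo μ ξ / n + ε) +
      (M * partInfo μ ξ / n) * (1 / ((l : ℝ) + 1))) atTop
      (nhds ((partInfo μ ξ / n + ε) + (M * partInfo μ ξ / n) * 0)) :=
    (tendsto_one_div_add_atTop_nhds_zero_nat.const_mul _).const_add _
  simpa using ge_of_tendsto' hlim key

end Generator

/-! ### Expansivity and Bowen partitions -/

section Bowen

lemma isClosed_bowenBall [MetricSpace X] {f : X → X} (hf : Continuous f) (n : ℕ) (ε : ℝ) (x : X) :
    IsClosed (bowenBall dist f n ε x) := by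
  simp only [bowenBall, Set.ofPred_forall]
  refine isClosed_iInter fun k => isClosed_iInter fun _ => ?_
  have h1 := hf.iterate k
  exact isClosed_le (by fun_prop) continuous_const

lemma dist_le_of_mem_bowenBall [MetricSpace X] {f : X → X} {n : ℕ} {r : ℝ} {x y z : X}
    (hy : y ∈ bowenBall dist f n r x) (hz : z ∈ bowenBall dist f n r x) {k : ℕ} (hk : k < n) :
    dist (f^[k] y) (f^[k] z) ≤ 2 * r := by
  have := dist_triangle_left (f^[k] y) (f^[k] z) (f^[k] x)
  have := hy k hk
  have := hz k hk
  linarith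

variable [MetricSpace X] [CompactSpace X]

/-- Uniform expansivity: by compactness, orbits staying `ε₀`-close on a long window are close in the
middle of the window. -/
lemma exists_uniform_expansive {f finv : X → X} (hf : Continuous f) (hfinv : Continuous finv)
    (hleft : Function.LeftInverse finv f) {ε₀ : ℝ}
    (hexp : ∀ x y : X, (∀ n : ℕ, dist (f^[n] x) (f^[n] y) ≤ ε₀ ∧
      dist (finv^[n] x) (finv^[n] y) ≤ ε₀) → x = y) {δ : ℝ} (hδ : 0 < δ) :
    ∃ N : ℕ, ∀ x y : X, (∀ k < 2 * N + 1, dist (f^[k] x) (f^[k] y) ≤ ε₀) →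
      dist (f^[N] x) (f^[N] y) < δ := by
  by_contra! hcon
  let t : ℕ → Set (X × X) := fun N => {z | δ ≤ dist z.1 z.2 ∧ ∀ k ≤ N,
    dist (f^[k] z.1) (f^[k] z.2) ≤ ε₀ ∧ dist (finv^[k] z.1) (finv^[k] z.2) ≤ ε₀}
  have hclosed : ∀ N, IsClosed (t N) := by
    intro N
    simp only [t, Set.ofPred_and, Set.ofPred_forall]
    refine (isClosed_le continuous_const continuous_dist).inter ?_
    refine isClosed_iInter fun k => isClosed_iInter fun _ => ?_
    have h1 := hf.iterate k
    have h2 := hfinv.iterate k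
    exact (isClosed_le (by fun_prop) continuous_const).inter
      (isClosed_le (by fun_prop) continuous_const)
  have hne : ∀ N, (t N).Nonempty := by
    intro N
    obtain ⟨x, y, hxy, hd⟩ := hcon N
    refine ⟨(f^[N] x, f^[N] y), hd, fun k hk => ⟨?_, ?_⟩⟩
    · simp only [← Function.iterate_add_apply]
      exact hxy _ (by omega)
    · have : ∀ z, finv^[k] (f^[N] z) = f^[N - k] z := by
        intro z
        conv_lhs => rw [← Nat.add_sub_cancel' hk, Function.iterate_add_apply]
        exact hleft.iterate k _
      simp only [this]
      exact hxy _ (by omega)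
  obtain ⟨⟨x, y⟩, hxy⟩ := IsCompact.nonempty_iInter_of_sequence_nonempty_isCompact_isClosed t
    (fun N z hz => ⟨hz.1, fun k hk => hz.2 k (hk.trans N.le_succ)⟩) hne
    (hclosed 0).isCompact hclosed
  rw [Set.mem_iInter] at hxy
  have hd := (hxy 0).1
  have heq : x = y := hexp x y fun n => (hxy n).2 n le_rfl
  simp only [heq, dist_self] at hd
  exact hδ.not_ge hd

/-- A finite measurable partition, labelled by the points `e i` of a maximal separated set, whose
atoms lie in the Bowen balls of radius `r` around these points, while the Bowen balls of radius
`r / 2` are disjoint. -/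
lemma exists_bowen_partition [MeasurableSpace X] [BorelSpace X] {f : X → X} (hf : Continuous f)
    (n : ℕ) {r : ℝ} (hr : 0 < r) :
    ∃ (N : ℕ) (e : Fin N → X) (ξ : X → Fin N), MeasPart ξ ∧
      (∀ z, z ∈ bowenBall dist f n r (e (ξ z))) ∧
      ∀ i j, i ≠ j →
        Disjoint (bowenBall dist f n (r / 2) (e i)) (bowenBall dist f n (r / 2) (e j)) := by
  classical
  -- The Bowen metric is the sup metric pulled back along `x ↦ (f^k x)_{k < n}`.
  let F : X → Fin n → X := fun x k => f^[k] x
  have hF : Continuous F := continuous_pi fun k => hf.iterate k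
  let ε : NNReal := ⟨r, hr.le⟩
  have hε : ε ≠ 0 := fun h => hr.ne' (congrArg NNReal.toReal h)
  have hpack : Metric.packingNumber ε (Set.range F) ≠ ⊤ := by
    obtain ⟨S, -, hS, hcov⟩ := Metric.exists_finite_isCover_of_isCompact (ε := ε / 2)
      (by positivity) (isCompact_range hF)
    have h1 := Metric.packingNumber_two_mul_le_externalCoveringNumber (ε / 2) (Set.range F)
    rw [mul_div_cancel₀ _ two_ne_zero] at h1
    have h2 := hcov.externalCoveringNumber_le_encard
    exact ((h1.trans h2).trans_lt hS.encard_lt_top).ne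
  set S := Metric.maximalSeparatedSet ε (Set.range F) with hSdef
  have hSfin : S.Finite := by
    rw [← Set.encard_ne_top_iff, Metric.encard_maximalSeparatedSet hpack]
    exact hpack
  have hScov : Metric.IsCover ε (Set.range F) S := Metric.isCover_maximalSeparatedSet hpack
  have hSsep : Metric.IsSeparated ε S := Metric.isSeparated_maximalSeparatedSet
  have hSsub : S ⊆ Set.range F := Metric.maximalSeparatedSet_subset
  have : Finite S := hSfin
  obtain ⟨N, ⟨E⟩⟩ := Finite.exists_equiv_fin S
  have hpre : ∀ i : Fin N, ∃ x, F x = E.symm i := fun i => hSsub (E.symm i).2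
  choose e he using hpre
  have hcov : ∀ z, ∃ k, ∃ h : k < N, z ∈ bowenBall dist f n r (e ⟨k, h⟩) := by
    intro z
    have := hScov.subset_iUnion_closedBall ⟨z, rfl⟩
    simp only [Set.mem_iUnion] at this
    obtain ⟨y, hy, hzy⟩ := this
    refine ⟨E ⟨y, hy⟩, (E ⟨y, hy⟩).2, fun k hk => ?_⟩
    have h1 : F (e (E ⟨y, hy⟩)) = y := by simp [he]
    have h2 := dist_le_pi_dist (F z) y ⟨k, hk⟩
    rw [dist_comm]
    rw [← h1] at h2 hzy
    exact h2.trans hzy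
  have hfind : Measurable fun z => Nat.find (hcov z) := by
    refine measurable_find hcov fun k => ?_
    by_cases h : k < N
    · simp only [h, exists_true_left]
      exact (isClosed_bowenBall hf n r _).measurableSet
    · simp [h]
  refine ⟨N, e, fun z => ⟨Nat.find (hcov z), (Nat.find_spec (hcov z)).1⟩, ?_, ?_, ?_⟩
  · refine measPart_of_singleton fun i => ?_
    convert hfind (measurableSet_singleton (i : ℕ)) using 1
    ext z
    simp [Fin.ext_iff]
  · exact fun z => (Nat.find_spec (hcov z)).2
  · intro i j hij
    rw [Set.disjoint_left]
    intro z hzi hzj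
    have hne : (E.symm i : Fin n → X) ≠ E.symm j := fun h => hij (by simpa using Subtype.ext h)
    have h1 := hSsep (E.symm i).2 (E.symm j).2 hne
    rw [← he, ← he, edist_nndist] at h1
    have h2 : r < dist (F (e i)) (F (e j)) := by
      have : ε < nndist (F (e i)) (F (e j)) := by exact_mod_cast h1
      exact this
    refine h2.not_ge ((dist_pi_le_iff hr.le).2 fun k => ?_)
    have h3 := dist_triangle_right (f^[k] (e i)) (f^[k] (e j)) (f^[k] z)
    have h4 := hzi k k.2
    have h5 := hzj k k.2
    change dist (f^[k] (e i)) (f^[k] (e j)) ≤ r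
    linarith

/-- The limit of a subadditive sequence divided by `n` is a lower bound of the averages. -/
lemma le_div_of_subadditive {a : ℕ → ℝ} (ha : ∀ m n, 1 ≤ m → 1 ≤ n → a (m + n) ≤ a m + a n) {L : ℝ}
    (hL : Tendsto (fun n => a n / n) atTop (nhds L)) {n : ℕ} (hn : 0 < n) : L ≤ a n / n := by
  have hmul : ∀ l : ℕ, a (n * (l + 1)) ≤ (l + 1) * a n := by
    intro l
    induction l with
    | zero => simp
    | succ l ih =>
      have h := ha (n * (l + 1)) n (Nat.mul_pos hn l.succ_pos) hn
      rw [← Nat.mul_succ] at h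
      push_cast
      linarith
  have htend : Tendsto (fun l : ℕ => n * (l + 1)) atTop atTop :=
    (tendsto_add_atTop_nat 1).const_mul_atTop' hn
  refine le_of_tendsto' (hL.comp htend) fun l => ?_
  have hn' : (0 : ℝ) < n := by exact_mod_cast hn
  simp only [Function.comp_apply]
  rw [div_le_div_iff₀ (by push_cast; positivity) hn']
  push_cast
  have := mul_le_mul_of_nonneg_right (hmul l) hn'.le
  linarith

/-- The elementary form of the log-sum inequality, from `log u ≤ u - 1` at `u = a / (w s)`. -/
lemma negMulLog_add_mul_log_le {w a s : ℝ} (hw : 0 ≤ w) (ha : 0 < a) (hs : 0 < s) :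
    Real.negMulLog w + w * Real.log a ≤ a / s + w * Real.log s := by
  rcases hw.eq_or_lt with rfl | hw
  · simpa using (div_pos ha hs).le
  · have h := Real.log_le_sub_one_of_pos (x := a / (w * s)) (by positivity)
    rw [Real.log_div ha.ne' (by positivity), Real.log_mul hw.ne' hs.ne'] at h
    have h2 := mul_le_mul_of_nonneg_left h hw.le
    have h3 : w * (a / (w * s) - 1) = a / s - w := by field_simp
    rw [h3] at h2
    rw [Real.negMulLog]
    linarith

end Bowen

/-! ### Uniqueness -/

/-- **Lemma 3.1.** Let `(X,f)` be an expansive homeomorphism of a compact metric space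
and `Φ = {log φ_n}` a subadditive potential with bounded distortion. If `η` is an
ergodic equilibrium state of `Φ` with the lower subadditive Gibbs property, then `η`
is the unique equilibrium state of `Φ`. -/
theorem unique_eq_state_of_ergodic_lowerGibbs
    {X : Type*} [MetricSpace X] [CompactSpace X] [MeasurableSpace X] [BorelSpace X]
    (f finv : X → X) (hf : Continuous f) (hfinv : Continuous finv)
    (hleft : Function.LeftInverse finv f) (hright : Function.RightInverse finv f)
    (hexp : IsExpansive dist f finv)
    (φ : ℕ → X → ℝ) (hφ : IsSubadditivePotential f φ)
    (hbd : HasBoundedDistortion dist f φ)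
    (η : Measure X) (hEq : IsEqState dist f φ η) (hErg : Ergodic f η)
    (hGibbs : HasLowerGibbs dist f φ η) :
    ∀ ν : Measure X, IsEqState dist f φ ν → ν = η := by
  intro ν hν
  classical
  obtain ⟨hηp, hηf, -⟩ := hEq
  obtain ⟨hνp, hνf, L, hL, hP⟩ := hν
  obtain ⟨hφc, hφpos, hφsub⟩ := hφ
  refine hErg.eq_of_absolutelyContinuous hνf ?_
  by_contra hac
  -- Otherwise some compact `K` is null for `η` but not for `ν`.
  obtain ⟨K, hK, hηK, hνK⟩ : ∃ K, IsCompact K ∧ η K = 0 ∧ 0 < ν.real K := by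
    have h1 : ∃ B, MeasurableSet B ∧ η B = 0 ∧ ν B ≠ 0 := by
      by_contra! hcon
      exact hac (Measure.AbsolutelyContinuous.mk fun B hB hB0 => hcon B hB hB0)
    obtain ⟨B, hB, hηB, hνB⟩ := h1
    obtain ⟨K, hKB, hK, hK0⟩ := hB.exists_lt_isCompact_of_ne_top (measure_ne_top ν B)
      (pos_iff_ne_zero.2 hνB)
    exact ⟨K, hK, measure_mono_null hKB hηB, ENNReal.toReal_pos hK0.ne' (measure_ne_top _ _)⟩
  obtain ⟨ε₀, hε₀, hexp⟩ := hexp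
  obtain ⟨C, hC1, ε₁, hε₁, hC⟩ := hbd
  set P := pressure dist f φ with hPdef
  -- Atoms of radius at most `r` have bounded distortion and Bowen diameter at most `ε₀`.
  obtain ⟨r, hr, hrε₁, hrε₀⟩ : ∃ r > 0, r ≤ ε₁ ∧ 2 * r ≤ ε₀ :=
    ⟨min ε₁ (ε₀ / 2), by positivity, min_le_left _ _, by
      have := min_le_right ε₁ (ε₀ / 2); linarith⟩
  obtain ⟨D, hD1, hD⟩ := hGibbs (r / 2) (by positivity)
  have hD0 : 0 < D := by linarith
  -- `s` is so small that the final inequality reads `0 ≤ -1`.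
  obtain ⟨s, hs0, hs1, hs⟩ : ∃ s : ℝ, 0 < s ∧ Real.log s ≤ 0 ∧
      ν.real K * Real.log s = -(Real.log C + 2 + D) := by
    have := Real.log_nonneg hC1
    refine ⟨Real.exp (-(Real.log C + 2 + D) / ν.real K), Real.exp_pos _, ?_, ?_⟩
    · rw [Real.log_exp]
      exact div_nonpos_of_nonpos_of_nonneg (by linarith) hνK.le
    · rw [Real.log_exp]
      field_simp
  obtain ⟨δ, hδ, hδη⟩ : ∃ δ > 0, η.real (Metric.thickening δ K) ≤ s / D := by
    have h1 := tendsto_measure_thickening_of_isClosed (μ := η) (s := K)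
      ⟨1, one_pos, measure_ne_top _ _⟩ hK.isClosed
    rw [hηK] at h1
    have h2 := h1.eventually (gt_mem_nhds (ENNReal.ofReal_pos.2 (div_pos hs0 hD0)))
    obtain ⟨δ, hδ1, hδ2⟩ := (h2.and self_mem_nhdsWithin).exists
    exact ⟨δ, hδ2, ENNReal.toReal_le_of_le_ofReal (by positivity) hδ1.le⟩
  obtain ⟨N, hN⟩ := exists_uniform_expansive hf hfinv hleft hexp hδ
  set n := 2 * N + 1 with hn
  have hn0 : 0 < n := by omega
  have hnR : (0 : ℝ) < n := by exact_mod_cast hn0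
  obtain ⟨m, e, ξ, hξ, hξe, hdisj⟩ := exists_bowen_partition hf n hr
  have hmid : ∀ i, ∀ y ∈ bowenBall dist f n r (e i), ∀ z ∈ bowenBall dist f n r (e i),
      dist (f^[N] y) (f^[N] z) < δ := fun i y hy z hz =>
    hN y z fun k hk => (dist_le_of_mem_bowenBall hy hz hk).trans hrε₀
  -- Agreement of `f^n`-itineraries of length `2 M + 1` bounds the distance along `f` up to time
  -- `(2 M + 1) n`, whose middle block starts at time `n M`.
  have hgen : IsGenerating f^[n] ξ := by
    intro δ' hδ'
    obtain ⟨M, hM⟩ := exists_uniform_expansive hf hfinv hleft hexp hδ'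
    refine ⟨M, 2 * M + 1, fun x y hxy => ?_⟩
    have hblock : ∀ k < n * (2 * M + 1), dist (f^[k] x) (f^[k] y) ≤ ε₀ := by
      intro k hk
      have h1 := congrFun hxy ⟨k / n, Nat.div_lt_of_lt_mul hk⟩
      simp only [refinePart] at h1
      have h2 := hξe ((f^[n])^[k / n] x)
      have h3 := hξe ((f^[n])^[k / n] y)
      rw [← h1] at h3
      have h4 := dist_le_of_mem_bowenBall h2 h3 (Nat.mod_lt k hn0)
      simp only [← Function.iterate_mul, ← Function.iterate_add_apply, Nat.mod_add_div] at h4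
      exact h4.trans hrε₀
    -- Apply expansivity to the window of length `2 M + 1` centred at time `n M`.
    have hsplit : ∀ z, (f^[n])^[M] z = f^[M] (f^[(n - 1) * M] z) := by
      intro z
      rw [← Function.iterate_mul, ← Function.iterate_add_apply]
      congr 1
      obtain ⟨n', hn'⟩ : ∃ n', n = n' + 1 := ⟨2 * N, hn⟩
      rw [hn', Nat.add_sub_cancel]
      ring
    rw [hsplit, hsplit]
    refine hM _ _ fun k hk => ?_
    rw [← Function.iterate_add_apply, ← Function.iterate_add_apply]
    refine hblock _ ?_
    obtain ⟨n', hn'⟩ : ∃ n', n = n' + 1 := ⟨2 * N, hn⟩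
    rw [hn', Nat.add_sub_cancel]
    nlinarith
  have hlogc : ∀ k, Continuous fun x => Real.log (φ k x) := fun k =>
    (hφc k).log fun x => (hφpos k x).ne'
  have hint : ∀ k, Integrable (fun x => Real.log (φ k x)) ν := fun k =>
    (hlogc k).integrable_of_hasCompactSupport (HasCompactSupport.of_compactSpace _)
  have hLn : L ≤ (∫ x, Real.log (φ n x) ∂ν) / n := by
    refine le_div_of_subadditive (a := fun k => ∫ x, Real.log (φ k x) ∂ν) ?_ hL hn0
    intro k l hk hl
    have hpre := hνf.iterate k
    have hcomp : ∫ x, Real.log (φ l (f^[k] x)) ∂ν = ∫ x, Real.log (φ l x) ∂ν := by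
      rw [← integral_map hpre.measurable.aemeasurable (hlogc l).aestronglyMeasurable,
        hpre.map_eq]
    have hintc : Integrable (fun x => Real.log (φ l (f^[k] x))) ν :=
      hpre.integrable_comp_of_integrable (hint l)
    change ∫ x, Real.log (φ (k + l) x) ∂ν ≤
      ∫ x, Real.log (φ k x) ∂ν + ∫ x, Real.log (φ l x) ∂ν
    rw [← hcomp, ← integral_add (hint k) hintc]
    exact integral_mono (hint _) ((hint k).add hintc) fun x => hφsub k l hk hl x
  have hEnt := entropyKS_le hνf hn0 hξ hgen
  set w : Fin m → ℝ := fun i => ν.real (ξ ⁻¹' {i}) with hw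
  have hw0 : ∀ i, 0 ≤ w i := fun i => measureReal_nonneg
  have hwsum : ∑ i, w i = 1 := by
    have := measureReal_eq_sum_inter (μ := ν) hξ Set.univ
    simpa using this.symm
  -- Bounded distortion replaces `φ_n` by its values at the centres.
  have hIntle : ∫ x, Real.log (φ n x) ∂ν ≤ (∑ i, w i * Real.log (φ n (e i))) + Real.log C := by
    have hξm : Measurable ξ := fun t _ => hξ t
    have h1 : ∫ x, (Real.log (φ n (e (ξ x))) + Real.log C) ∂ν =
        (∑ i, w i * Real.log (φ n (e i))) + Real.log C := by
      rw [← integral_map (f := fun i => Real.log (φ n (e i)) + Real.log C) hξm.aemeasurable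
        (measurable_of_finite _).aestronglyMeasurable, integral_fintype .of_finite]
      have h2 : ∀ i, (ν.map ξ).real {i} = w i := fun i =>
        map_measureReal_apply hξm (measurableSet_singleton i)
      simp only [h2, smul_eq_mul, mul_add, Finset.sum_add_distrib, ← Finset.sum_mul, hwsum,
        one_mul]
    rw [← h1]
    refine integral_mono (hint n) ?_ fun x => ?_
    · have : IsProbabilityMeasure (ν.map ξ) := Measure.isProbabilityMeasure_map hξm.aemeasurable
      exact (Integrable.of_finite (μ := ν.map ξ)
        (f := fun i => Real.log (φ n (e i)) + Real.log C)).comp_measurable hξm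
    · have hself : e (ξ x) ∈ bowenBall dist f n r (e (ξ x)) := fun k _ => by
        rw [dist_self]; exact hr.le
      have h2 := (hC r hr hrε₁ (e (ξ x)) n x (hξe x) _ hself).2
      rw [div_le_iff₀ (hφpos _ _)] at h2
      have h3 := Real.log_le_log (hφpos _ _) h2
      rw [Real.log_mul (by positivity) (hφpos _ _).ne'] at h3
      change Real.log (φ n x) ≤ Real.log (φ n (e (ξ x))) + Real.log C
      linarith
  set a : Fin m → ℝ := fun i => Real.exp (-(n : ℝ) * P) * φ n (e i) with ha
  have ha0 : ∀ i, 0 < a i := fun i => mul_pos (Real.exp_pos _) (hφpos _ _)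
  have hmain : 0 ≤ (∑ i, (Real.negMulLog (w i) + w i * Real.log (a i))) + Real.log C := by
    have h1 : ∀ i, w i * Real.log (a i) = w i * Real.log (φ n (e i)) - w i * (n * P) := by
      intro i
      simp only [ha]
      rw [Real.log_mul (Real.exp_pos _).ne' (hφpos _ _).ne', Real.log_exp]
      ring
    simp only [h1, Finset.sum_add_distrib, Finset.sum_sub_distrib, ← Finset.sum_mul, hwsum,
      one_mul]
    rw [le_div_iff₀ hnR] at hEnt hLn
    have h2 : partInfo ν ξ = ∑ i, Real.negMulLog (w i) := rfl
    rw [h2] at hEnt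
    rw [← hP]
    linarith
  -- The lower Gibbs bound on disjoint Bowen balls.
  have haη : ∀ (G : Finset (Fin m)) (A : Set X),
      (∀ i ∈ G, bowenBall dist f n (r / 2) (e i) ⊆ A) → ∑ i ∈ G, a i ≤ D * η.real A := by
    intro G A hGA
    have h1 : ∀ i, a i ≤ D * η.real (bowenBall dist f n (r / 2) (e i)) := by
      intro i
      have h2 := (ENNReal.ofReal_le_iff_le_toReal (measure_ne_top _ _)).1 (hD (e i) n)
      rw [mul_assoc, inv_mul_le_iff₀ hD0] at h2
      exact h2
    refine (Finset.sum_le_sum fun i _ => h1 i).trans ?_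
    rw [← Finset.mul_sum, ← measureReal_biUnion_finset (fun i _ j _ hij => hdisj i j hij)
      (fun i _ => (isClosed_bowenBall hf n _ _).measurableSet)]
    exact mul_le_mul_of_nonneg_left (measureReal_mono (Set.iUnion₂_subset hGA)) hD0.le
  -- `G` labels the atoms whose image under `f^N` meets `K`.
  set G : Finset (Fin m) := Finset.univ.filter fun i => ∃ z, ξ z = i ∧ f^[N] z ∈ K with hG
  have hGa : ∑ i ∈ G, a i ≤ s := by
    have h1 := haη G (f^[N] ⁻¹' Metric.thickening δ K) (by
      intro i hi y hy
      obtain ⟨z, hz, hzK⟩ := (Finset.mem_filter.1 hi).2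
      refine Metric.mem_thickening_iff.2 ⟨_, hzK, hmid i y ?_ z (hz ▸ hξe z)⟩
      exact fun k hk => (hy k hk).trans (by linarith))
    rw [(hηf.iterate N).measureReal_preimage
      Metric.isOpen_thickening.measurableSet.nullMeasurableSet] at h1
    refine h1.trans ?_
    have := mul_le_mul_of_nonneg_left hδη hD0.le
    rwa [mul_div_cancel₀ _ hD0.ne'] at this
  have hGca : ∑ i ∈ Gᶜ, a i ≤ D := by
    have h1 := haη Gᶜ Set.univ fun _ _ => Set.subset_univ _
    simpa using h1
  have hGw : ν.real K ≤ ∑ i ∈ G, w i := by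
    rw [← (hνf.iterate N).measureReal_preimage hK.isClosed.measurableSet.nullMeasurableSet,
      sum_measureReal_preimage_singleton G fun i _ => hξ {i}]
    refine measureReal_mono fun z hz => ?_
    simp only [Set.mem_preimage, Finset.mem_coe, hG, Finset.mem_filter, Finset.mem_univ, true_and]
    exact ⟨z, rfl, hz⟩
  have hsumG : ∑ i ∈ G, (Real.negMulLog (w i) + w i * Real.log (a i)) ≤
      1 + ν.real K * Real.log s := by
    refine (Finset.sum_le_sum fun i _ =>
      negMulLog_add_mul_log_le (hw0 i) (ha0 i) hs0).trans ?_
    rw [Finset.sum_add_distrib, ← Finset.sum_div, ← Finset.sum_mul]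
    exact add_le_add ((div_le_one hs0).2 hGa) (mul_le_mul_of_nonpos_right hGw hs1)
  have hsumGc : ∑ i ∈ Gᶜ, (Real.negMulLog (w i) + w i * Real.log (a i)) ≤ D := by
    refine (Finset.sum_le_sum fun i _ =>
      negMulLog_add_mul_log_le (hw0 i) (ha0 i) one_pos).trans ?_
    simpa using hGca
  rw [← Finset.sum_add_sum_compl G] at hmain
  linarith

end SubEq
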